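/- Let G be a game with probabilistic uncertainty with priority function p_G : L → {0,…,d}, and let H be the partial-observation game constructed from G with priority function p_H((ℓ,ℓ')) = p_H((ℓ,ℓ',σ_I)) = p_G(ℓ) and complete observation for Player 2. Player 1 has a sure winning strategy from ℓ_0 in G for Parity(p_G) against all all-powerful Player-2 strategies if and only if Player 1 has an observation-based strategy in H that is sure winning for Parity(p_H) from every state (ℓ_0, ℓ) with un(ℓ_0)(ℓ) > 0 against all Player-2 strategies. -/

import Mathlib

open Finset MeasureTheory
open scoped Classical

/- ### Games with probabilistic uncertainty -/

/-- A game with probabilistic uncertainty `(L, Σ_I, Σ_O, Δ, un)`. -/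
structure PUGame (L Ai Ao : Type) [Fintype L] [Fintype Ai] [Fintype Ao] : Type where
  Δ : L → Ai → Ao → L → ℝ
  Δ_nonneg : ∀ ℓ σi σo ℓ', 0 ≤ Δ ℓ σi σo ℓ'
  Δ_sum_one : ∀ ℓ σi σo, ∑ ℓ', Δ ℓ σi σo ℓ' = 1
  un : L → L → ℝ
  un_nonneg : ∀ ℓ ℓ', 0 ≤ un ℓ ℓ'
  un_sum_one : ∀ ℓ, ∑ ℓ', un ℓ ℓ' = 1

/-- A finite prefix `ℓ₀ σ₀ᶦ σ₀ᵒ ℓ₁ … ℓₙ`: the initial location together with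
the list of steps `(σᶦ, σᵒ, ℓ)` in *reverse* chronological order. -/
abbrev Pref (L Ai Ao : Type) : Type := L × List (Ai × Ao × L)

variable {L Ai Ao S A : Type}

/-- Last location of a prefix. -/
def lastLoc : Pref L Ai Ao → L
  | (ℓ0, []) => ℓ0
  | (_, t :: _) => t.2.2

/-- The sequence of input/output letters of a prefix (reverse chronological order). -/
def acts (ρ : Pref L Ai Ao) : List (Ai × Ao) := ρ.2.map fun t => (t.1, t.2.1)

/-- The locations occurring in a prefix. -/
def locList (ρ : Pref L Ai Ao) : List L := ρ.1 :: ρ.2.map fun t => t.2.2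

/-- Extension `ρ σᶦ σᵒ ℓ` of a prefix. -/
def extendPref (ρ : Pref L Ai Ao) (σi : Ai) (σo : Ao) (ℓ : L) : Pref L Ai Ao :=
  (ρ.1, (σi, σo, ℓ) :: ρ.2)

section Core
variable [Fintype L] [Fintype Ai] [Fintype Ao]

def IsPrefAux (G : PUGame L Ai Ao) (ℓ0 : L) : List (Ai × Ao × L) → Prop
  | [] => True
  | t :: rest => IsPrefAux G ℓ0 rest ∧ 0 < G.Δ (lastLoc (ℓ0, rest)) t.1 t.2.1 t.2.2

/-- `ρ` is a genuine prefix of a play of `G`: every transition along `ρ` has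
positive probability. -/
def IsPref (G : PUGame L Ai Ao) (ρ : Pref L Ai Ao) : Prop := IsPrefAux G ρ.1 ρ.2

/-- The set of action-matching sequences of `ρ`: same length, same input and
output letters, arbitrary locations. -/
noncomputable def ActMt (ρ : Pref L Ai Ao) : Finset (Pref L Ai Ao) :=
  (Finset.univ : Finset (L × (Fin ρ.2.length → L))).image fun p =>
    (p.1, List.ofFn fun i => ((ρ.2.get i).1, (ρ.2.get i).2.1, p.2 i))

/-- `ObsSeq G ρ ρ'`: the probability of observing `ρ'` given that the actual
prefix is `ρ`.  (Closed form of the inductive definition: the product of the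
`un`-probabilities of the observed locations if the actions match, `0`
otherwise.) -/
noncomputable def ObsSeq (G : PUGame L Ai Ao) (ρ ρ' : Pref L Ai Ao) : ℝ :=
  if acts ρ' = acts ρ then (List.zipWith G.un (locList ρ) (locList ρ')).prod else 0

noncomputable def conePrAux (G : PUGame L Ai Ao) (α : Pref L Ai Ao → Ai → ℝ)
    (β : Pref L Ai Ao → Ai → Ao → ℝ) (ℓ0 : L) : List (Ai × Ao × L) → ℝ
  | [] => 1
  | t :: rest =>
      conePrAux G α β ℓ0 rest *
        ∑ ρ' ∈ ActMt ((ℓ0, rest) : Pref L Ai Ao),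
          ObsSeq G (ℓ0, rest) ρ' * α ρ' t.1 * β (ℓ0, rest) t.1 t.2.1 *
            G.Δ (lastLoc (ℓ0, rest)) t.1 t.2.1 t.2.2

/-- Cone probability `Pr^{α,β}_{ρ.1}(Cone(ρ))` in `G`, where Player 2 observes
the actual history. -/
noncomputable def conePr (G : PUGame L Ai Ao) (α : Pref L Ai Ao → Ai → ℝ)
    (β : Pref L Ai Ao → Ai → Ao → ℝ) (ρ : Pref L Ai Ao) : ℝ :=
  conePrAux G α β ρ.1 ρ.2

noncomputable def conePrAAux (G : PUGame L Ai Ao) (α : Pref L Ai Ao → Ai → ℝ)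
    (β : Pref L Ai Ao → Pref L Ai Ao → Ai → Ao → ℝ) (ℓ0 : L) : List (Ai × Ao × L) → ℝ
  | [] => 1
  | t :: rest =>
      conePrAAux G α β ℓ0 rest *
        ∑ ρ' ∈ ActMt ((ℓ0, rest) : Pref L Ai Ao),
          ObsSeq G (ℓ0, rest) ρ' * α ρ' t.1 * β (ℓ0, rest) ρ' t.1 t.2.1 *
            G.Δ (lastLoc (ℓ0, rest)) t.1 t.2.1 t.2.2

/-- Cone probability `Pr^{α,β^A}_{ρ.1}(Cone(ρ))` in `G` for an all-powerful
Player 2 (observing both the actual and the observed history). -/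
noncomputable def conePrA (G : PUGame L Ai Ao) (α : Pref L Ai Ao → Ai → ℝ)
    (β : Pref L Ai Ao → Pref L Ai Ao → Ai → Ao → ℝ) (ρ : Pref L Ai Ao) : ℝ :=
  conePrAAux G α β ρ.1 ρ.2

end Core

/-- A randomized Player-1 strategy in `G`. -/
structure Strat1 (L Ai Ao : Type) [Fintype Ai] : Type where
  toFun : Pref L Ai Ao → Ai → ℝ
  nonneg : ∀ ρ σi, 0 ≤ toFun ρ σi
  sum_one : ∀ ρ, ∑ σi, toFun ρ σi = 1

/-- A randomized Player-2 strategy in `G` (observing the actual history). -/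
structure Strat2 (L Ai Ao : Type) [Fintype Ao] : Type where
  toFun : Pref L Ai Ao → Ai → Ao → ℝ
  nonneg : ∀ ρ σi σo, 0 ≤ toFun ρ σi σo
  sum_one : ∀ ρ σi, ∑ σo, toFun ρ σi σo = 1

/-- An all-powerful randomized Player-2 strategy in `G` (observing both the
actual and the observed history). -/
structure StratA (L Ai Ao : Type) [Fintype Ao] : Type where
  toFun : Pref L Ai Ao → Pref L Ai Ao → Ai → Ao → ℝ
  nonneg : ∀ ρ ρ' σi σo, 0 ≤ toFun ρ ρ' σi σo
  sum_one : ∀ ρ ρ' σi, ∑ σo, toFun ρ ρ' σi σo = 1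

/- ### The partial-observation game `H` constructed from `G` -/

/-- A (stutter-suppressed) history of the partial-observation game `H`:
an initial state in `L × L` and a list of steps, in reverse order. -/
abbrev HPref (L Ai Ao : Type) : Type := (L × L) × List (Ai × Ao × (L × L))

def hLast : HPref L Ai Ao → L × L
  | (s0, []) => s0
  | (_, t :: _) => t.2.2

/-- First-component (actual) `G`-prefix of an `H`-history. -/
def g1 (ρH : HPref L Ai Ao) : Pref L Ai Ao :=
  (ρH.1.1, ρH.2.map fun t => (t.1, t.2.1, t.2.2.1))

/-- Second-component (observed) `G`-prefix of an `H`-history. -/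
def g2 (ρH : HPref L Ai Ao) : Pref L Ai Ao :=
  (ρH.1.2, ρH.2.map fun t => (t.1, t.2.1, t.2.2.2))

/-- Pairing of two action-matching `G`-prefixes into an `H`-history. -/
def h12 (ρ1 ρ2 : Pref L Ai Ao) : HPref L Ai Ao :=
  ((ρ1.1, ρ2.1), List.zipWith (fun t u => (t.1, t.2.1, (t.2.2, u.2.2))) ρ1.2 ρ2.2)

/-- A randomized Player-1 strategy in `H`. -/
structure HStrat1 (L Ai Ao : Type) [Fintype Ai] : Type where
  toFun : HPref L Ai Ao → Ai → ℝ
  nonneg : ∀ ρ σi, 0 ≤ toFun ρ σi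
  sum_one : ∀ ρ, ∑ σi, toFun ρ σi = 1

/-- A randomized Player-2 strategy in `H`. -/
structure HStrat2 (L Ai Ao : Type) [Fintype Ao] : Type where
  toFun : HPref L Ai Ao → Ai → Ao → ℝ
  nonneg : ∀ ρ σi σo, 0 ≤ toFun ρ σi σo
  sum_one : ∀ ρ σi, ∑ σo, toFun ρ σi σo = 1

/-- Player-1 observation-based: depends only on the second components and the
actions of the history. -/
def ObsBased1 (α : HPref L Ai Ao → Ai → ℝ) : Prop :=
  ∀ ρH ρH' : HPref L Ai Ao, g2 ρH = g2 ρH' → α ρH = α ρH'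

/-- Player-2 observation-based: depends only on the first components and the
actions of the history. -/
def ObsBased2 (β : HPref L Ai Ao → Ai → Ao → ℝ) : Prop :=
  ∀ ρH ρH' : HPref L Ai Ao, g1 ρH = g1 ρH' → β ρH = β ρH'

section HGame
variable [Fintype L] [Fintype Ai] [Fintype Ao]

/-- The initial distribution `μ` of `H` for the initial location `ℓ0` of `G`. -/
noncomputable def initDist (G : PUGame L Ai Ao) (ℓ0 : L) : L × L → ℝ :=
  fun s => if s.1 = ℓ0 then G.un ℓ0 s.2 else 0

noncomputable def conePrHAux (G : PUGame L Ai Ao) (μ : L × L → ℝ)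
    (α : HPref L Ai Ao → Ai → ℝ) (β : HPref L Ai Ao → Ai → Ao → ℝ)
    (s0 : L × L) : List (Ai × Ao × (L × L)) → ℝ
  | [] => μ s0
  | t :: rest =>
      conePrHAux G μ α β s0 rest * α (s0, rest) t.1 * β (s0, rest) t.1 t.2.1 *
        G.Δ (hLast ((s0, rest) : HPref L Ai Ao)).1 t.1 t.2.1 t.2.2.1 *
        G.un t.2.2.1 t.2.2.2

/-- Cone probability `Pr^{α,β}_μ(Cone(ρH))` in the game `H` constructed from
`G`, with initial distribution `μ`. -/
noncomputable def conePrH (G : PUGame L Ai Ao) (μ : L × L → ℝ)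
    (α : HPref L Ai Ao → Ai → ℝ) (β : HPref L Ai Ao → Ai → Ao → ℝ)
    (ρH : HPref L Ai Ao) : ℝ :=
  conePrHAux G μ α β ρH.1 ρH.2

end HGame

/- ### Mapping of strategies between `G` and `H` -/

/-- `ĝ` on Player-1 strategies. -/
def ghat1 (α : Pref L Ai Ao → Ai → ℝ) : HPref L Ai Ao → Ai → ℝ :=
  fun ρH => α (g2 ρH)

/-- `ĝ` on Player-2 strategies. -/
def ghat2 (β : Pref L Ai Ao → Ai → Ao → ℝ) : HPref L Ai Ao → Ai → Ao → ℝ :=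
  fun ρH => β (g1 ρH)

/-- `ĝ` on all-powerful Player-2 strategies. -/
def ghatA (β : Pref L Ai Ao → Pref L Ai Ao → Ai → Ao → ℝ) :
    HPref L Ai Ao → Ai → Ao → ℝ :=
  fun ρH => β (g1 ρH) (g2 ρH)

/-- `ĥ` on Player-1 strategies (using the canonical history `h12 ρ ρ` with
`g2 (h12 ρ ρ) = ρ`; well defined for observation-based strategies). -/
def hhat1 (α : HPref L Ai Ao → Ai → ℝ) : Pref L Ai Ao → Ai → ℝ :=
  fun ρ => α (h12 ρ ρ)

/-- `ĥ` on Player-2 strategies. -/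
def hhat2 (β : HPref L Ai Ao → Ai → Ao → ℝ) : Pref L Ai Ao → Ai → Ao → ℝ :=
  fun ρ => β (h12 ρ ρ)

/-- `ĥ` on complete-observation Player-2 strategies, giving an all-powerful
strategy in `G`. -/
def hhatA (β : HPref L Ai Ao → Ai → Ao → ℝ) :
    Pref L Ai Ao → Pref L Ai Ao → Ai → Ao → ℝ :=
  fun ρ1 ρ2 => β (h12 ρ1 ρ2)

/- ### Infinite plays, parity objectives, sure winning -/

/-- The sequence of locations of an infinite play of `G` starting at `ℓ0` with
step sequence `s`. -/
def gLoc (ℓ0 : L) (s : ℕ → Ai × Ao × L) : ℕ → L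
  | 0 => ℓ0
  | j + 1 => (s j).2.2

/-- The actual prefix of a play of `G` up to time `j`. -/
def gTake (ℓ0 : L) (s : ℕ → Ai × Ao × L) (j : ℕ) : Pref L Ai Ao :=
  (ℓ0, (List.ofFn fun i : Fin j => s i).reverse)

/-- The observed prefix of a play of `G` up to time `j`, for observed
locations `obsv`. -/
def gObsTake (obsv : ℕ → L) (s : ℕ → Ai × Ao × L) (j : ℕ) : Pref L Ai Ao :=
  (obsv 0, (List.ofFn fun i : Fin j => ((s i).1, (s i).2.1, obsv ((i : ℕ) + 1))).reverse)

/-- The parity objective: the minimum priority occurring infinitely often is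
even. -/
def ParityHolds (p : L → ℕ) (loc : ℕ → L) : Prop :=
  Even (sInf {k | ∃ᶠ i in Filter.atTop, p (loc i) = k})

section Outcome
variable [Fintype L] [Fintype Ai] [Fintype Ao]

/-- Membership of a play in `Outcome(G, ℓ0, α, β)` for a Player-2 strategy
observing the actual history. -/
def InOutcome (G : PUGame L Ai Ao) (ℓ0 : L) (α : Pref L Ai Ao → Ai → ℝ)
    (β : Pref L Ai Ao → Ai → Ao → ℝ) (s : ℕ → Ai × Ao × L) : Prop :=
  ∃ obsv : ℕ → L,
    (∀ j, 0 < G.un (gLoc ℓ0 s j) (obsv j)) ∧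
    (∀ j, 0 < α (gObsTake obsv s j) (s j).1) ∧
    (∀ j, 0 < β (gTake ℓ0 s j) (s j).1 (s j).2.1) ∧
    (∀ j, 0 < G.Δ (gLoc ℓ0 s j) (s j).1 (s j).2.1 (gLoc ℓ0 s (j + 1)))

/-- Membership of a play in `Outcome(G, ℓ0, α, β^A)` for an all-powerful
Player-2 strategy. -/
def InOutcomeA (G : PUGame L Ai Ao) (ℓ0 : L) (α : Pref L Ai Ao → Ai → ℝ)
    (β : Pref L Ai Ao → Pref L Ai Ao → Ai → Ao → ℝ) (s : ℕ → Ai × Ao × L) : Prop :=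
  ∃ obsv : ℕ → L,
    (∀ j, 0 < G.un (gLoc ℓ0 s j) (obsv j)) ∧
    (∀ j, 0 < α (gObsTake obsv s j) (s j).1) ∧
    (∀ j, 0 < β (gTake ℓ0 s j) (gObsTake obsv s j) (s j).1 (s j).2.1) ∧
    (∀ j, 0 < G.Δ (gLoc ℓ0 s j) (s j).1 (s j).2.1 (gLoc ℓ0 s (j + 1)))

end Outcome

/-- An infinite play of `H`: at each time `j`, the state `(x j).1 : L × L` and
the pair of actions `(x j).2` chosen at that state. -/
abbrev HPlay (L Ai Ao : Type) : Type := ℕ → (L × L) × Ai × Ao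

/-- The `j`-th step of an `H`-play. -/
def hPlayStep (x : HPlay L Ai Ao) (j : ℕ) : Ai × Ao × (L × L) :=
  ((x j).2.1, (x j).2.2, (x (j + 1)).1)

/-- The history of an `H`-play up to time `j`. -/
def hTakePlay (x : HPlay L Ai Ao) (j : ℕ) : HPref L Ai Ao :=
  ((x 0).1, (List.ofFn fun i : Fin j => hPlayStep x i).reverse)

section HOutcome
variable [Fintype L] [Fintype Ai] [Fintype Ao]

/-- An `H`-play is consistent with the strategies `α, β` from initial state
`s0` (all choices and transitions have positive probability). -/
def HConsistent (G : PUGame L Ai Ao) (s0 : L × L)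
    (α : HPref L Ai Ao → Ai → ℝ) (β : HPref L Ai Ao → Ai → Ao → ℝ)
    (x : HPlay L Ai Ao) : Prop :=
  (x 0).1 = s0 ∧
  (∀ j, 0 < α (hTakePlay x j) (x j).2.1) ∧
  (∀ j, 0 < β (hTakePlay x j) (x j).2.1 (x j).2.2) ∧
  (∀ j, 0 < G.Δ (x j).1.1 (x j).2.1 (x j).2.2 (x (j + 1)).1.1 *
          G.un (x (j + 1)).1.1 (x (j + 1)).1.2)

end HOutcome

/- ### Measures on infinite plays -/

/-- The discrete product σ-algebra on infinite plays. -/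
instance playMS (St : Type) : MeasurableSpace (ℕ → St) :=
  @MeasurableSpace.pi ℕ (fun _ => St) (fun _ => ⊤)

/-- The cylinder (cone) of a finite list of steps (in reverse chronological
order): plays whose first steps are exactly the given ones. -/
def listCylinder {St : Type} (l : List St) : Set (ℕ → St) :=
  {s | (List.ofFn fun i : Fin l.length => s i) = l.reverse}

/-- The cylinder (cone) of an `H`-history. -/
def hCylinder (ρH : HPref L Ai Ao) : Set (HPlay L Ai Ao) :=
  {x | (x 0).1 = ρH.1 ∧ (List.ofFn fun i : Fin ρH.2.length => hPlayStep x i) = ρH.2.reverse}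

/-- The map sending an `H`-play to the `G`-play of first components with the
same actions. -/
def proj1Play (x : HPlay L Ai Ao) : ℕ → Ai × Ao × L :=
  fun j => ((x j).2.1, (x j).2.2, (x (j + 1)).1.1)

section MeasCones
variable [Fintype L] [Fintype Ai] [Fintype Ao]

/-- `ν` extends the cone probabilities `Pr^{α,β}_{ℓ0}` of `G`. -/
def GCones (G : PUGame L Ai Ao) (ℓ0 : L) (α : Pref L Ai Ao → Ai → ℝ)
    (β : Pref L Ai Ao → Ai → Ao → ℝ) (ν : Measure (ℕ → Ai × Ao × L)) : Prop :=
  ∀ l : List (Ai × Ao × L),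
    ν (listCylinder l) = ENNReal.ofReal (conePr G α β (ℓ0, l))

/-- `ν` extends the cone probabilities `Pr^{α,β^A}_{ℓ0}` of `G` (all-powerful
Player 2). -/
def GConesA (G : PUGame L Ai Ao) (ℓ0 : L) (α : Pref L Ai Ao → Ai → ℝ)
    (β : Pref L Ai Ao → Pref L Ai Ao → Ai → Ao → ℝ)
    (ν : Measure (ℕ → Ai × Ao × L)) : Prop :=
  ∀ l : List (Ai × Ao × L),
    ν (listCylinder l) = ENNReal.ofReal (conePrA G α β (ℓ0, l))

/-- `ν` extends the cone probabilities `Pr^{α,β}_μ` of `H`. -/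
def HCones (G : PUGame L Ai Ao) (μ : L × L → ℝ) (α : HPref L Ai Ao → Ai → ℝ)
    (β : HPref L Ai Ao → Ai → Ao → ℝ) (ν : Measure (HPlay L Ai Ao)) : Prop :=
  ∀ ρH : HPref L Ai Ao,
    ν (hCylinder ρH) = ENNReal.ofReal (conePrH G μ α β ρH)

end MeasCones

theorem aux_h12 (ℓ0 : L) (x : HPlay L Ai Ao) (h0 : (x 0).1.1 = ℓ0) (j : ℕ) :
    h12 (gTake ℓ0 (proj1Play x) j) (gObsTake (fun i => (x i).1.2) (proj1Play x) j)
      = hTakePlay x j := by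
  subst h0
  refine Prod.ext rfl ?_
  apply List.ext_getElem
  · simp [h12, gTake, gObsTake, hTakePlay]
  · intro n h1 h2
    simp [h12, gTake, gObsTake, hTakePlay, proj1Play, hPlayStep]

theorem aux_g1 (ℓ0 : L) (x : HPlay L Ai Ao) (h0 : (x 0).1.1 = ℓ0) (j : ℕ) :
    g1 (hTakePlay x j) = gTake ℓ0 (proj1Play x) j := by
  subst h0
  refine Prod.ext rfl ?_
  apply List.ext_getElem
  · simp [g1, gTake, hTakePlay]
  · intro n h1 h2
    simp [g1, gTake, hTakePlay, proj1Play, hPlayStep]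

theorem aux_g2 (x : HPlay L Ai Ao) (j : ℕ) :
    g2 (hTakePlay x j) = gObsTake (fun i => (x i).1.2) (proj1Play x) j := by
  refine Prod.ext rfl ?_
  apply List.ext_getElem
  · simp [g2, gObsTake, hTakePlay]
  · intro n h1 h2
    simp [g2, gObsTake, hTakePlay, proj1Play, hPlayStep]

theorem aux_g2h (ρ : Pref L Ai Ao) : g2 (h12 ρ ρ) = ρ := by
  refine Prod.ext rfl ?_
  apply List.ext_getElem
  · simp [g2, h12]
  · intro n h1 h2
    simp [g2, h12]

theorem aux_loc (ℓ0 : L) (x : HPlay L Ai Ao) (h0 : (x 0).1.1 = ℓ0) (j : ℕ) :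
    gLoc ℓ0 (proj1Play x) j = (x j).1.1 := by
  cases j
  · exact h0.symm
  · rfl

/-- Player 1 has a sure winning strategy from `ℓ0` in `G` for
`Parity(p_G)` against all all-powerful Player-2 strategies iff Player 1 has an
observation-based strategy in `H` that is sure winning for `Parity(p_H)` from
every state `(ℓ0, ℓ)` with `un(ℓ0)(ℓ) > 0` against all Player-2 strategies. -/
theorem sure_winning_equiv_allpowerful {L Ai Ao : Type}
    [Fintype L] [Fintype Ai] [Fintype Ao]
    (G : PUGame L Ai Ao) (pG : L → ℕ) (d : ℕ) (hd : ∀ ℓ, pG ℓ ≤ d) (ℓ0 : L) :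
    (∃ α : Strat1 L Ai Ao, ∀ βA : StratA L Ai Ao, ∀ s : ℕ → Ai × Ao × L,
        InOutcomeA G ℓ0 α.toFun βA.toFun s → ParityHolds pG (gLoc ℓ0 s)) ↔
    (∃ αH : HStrat1 L Ai Ao, ObsBased1 αH.toFun ∧
        ∀ ℓ : L, 0 < G.un ℓ0 ℓ → ∀ βH : HStrat2 L Ai Ao, ∀ x : HPlay L Ai Ao,
          HConsistent G (ℓ0, ℓ) αH.toFun βH.toFun x →
          ParityHolds pG fun i => (x i).1.1) := by
  constructor
  · rintro ⟨α, hα⟩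
    refine ⟨⟨fun ρ => α.toFun (g2 ρ), fun _ _ => α.nonneg _ _, fun _ => α.sum_one _⟩,
      fun ρ ρ' h => by simp only [h], ?_⟩
    rintro ℓ hℓ βH x ⟨hx0, hxα, hxβ, hxt⟩
    have h0 : (x 0).1.1 = ℓ0 := by rw [hx0]
    have hp : ∀ j, 0 < G.Δ (x j).1.1 (x j).2.1 (x j).2.2 (x (j + 1)).1.1 ∧
        0 < G.un (x (j + 1)).1.1 (x (j + 1)).1.2 := fun j => by
      refine (pos_and_pos_or_neg_and_neg_of_mul_pos (hxt j)).resolve_right fun h => ?_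
      exact absurd h.1 (not_lt.2 (G.Δ_nonneg _ _ _ _))
    have key := hα ⟨fun ρ ρ' => βH.toFun (h12 ρ ρ'), fun _ _ _ _ => βH.nonneg _ _ _,
      fun _ _ _ => βH.sum_one _ _⟩ (proj1Play x) ⟨fun i => (x i).1.2, ?_, ?_, ?_, ?_⟩
    · rwa [funext (aux_loc ℓ0 x h0)] at key
    · intro j
      rw [aux_loc ℓ0 x h0]
      cases j with
      | zero => simpa [hx0] using hℓ
      | succ j => exact (hp j).2
    · intro j
      rw [← aux_g2]
      exact hxα j
    · intro j
      change 0 < βH.toFun (h12 _ _) _ _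
      rw [aux_h12 ℓ0 x h0]
      exact hxβ j
    · intro j
      rw [aux_loc ℓ0 x h0, aux_loc ℓ0 x h0]
      exact (hp j).1
  · rintro ⟨αH, hobs, hα⟩
    refine ⟨⟨fun ρ => αH.toFun (h12 ρ ρ), fun _ _ => αH.nonneg _ _, fun _ => αH.sum_one _⟩, ?_⟩
    rintro βA s ⟨obsv, hun, hsα, hsβ, hst⟩
    let x : HPlay L Ai Ao := fun j => ((gLoc ℓ0 s j, obsv j), (s j).1, (s j).2.1)
    have hs : proj1Play x = s := rfl
    refine hα (obsv 0) (hun 0) ⟨fun ρ => βA.toFun (g1 ρ) (g2 ρ), fun _ _ _ => βA.nonneg _ _ _ _,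
      fun _ _ => βA.sum_one _ _ _⟩ x ⟨rfl, ?_, ?_, ?_⟩
    · intro j
      rw [hobs (hTakePlay x j) (h12 (gObsTake obsv s j) (gObsTake obsv s j))
        (by rw [aux_g2h, aux_g2, hs])]
      exact hsα j
    · intro j
      change 0 < βA.toFun (g1 _) (g2 _) _ _
      rw [aux_g1 ℓ0 x rfl, aux_g2, hs]
      exact hsβ j
    · intro j
      exact mul_pos (hst j) (hun (j + 1))
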